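/- If A is an n×m nonnegative real matrix that, after permutations of rows and of columns, contains a k×k diagonal principal submatrix D_k with rank(D_k) = rank(A) = k and all diagonal entries of D_k positive, then A admits an exact nonnegative rank factorization A = FV with intermediate dimension k. -/

import Mathlib

/-- If a matrix of rank `k` contains a nonsingular diagonal `k × k` submatrix, then it factors
through the corresponding rows and columns. -/
theorem Matrix.apply_eq_sum_of_diagonal_submatrix {K ι m n : Type*} [Field K] [Fintype ι]
    [Fintype m] [Fintype n] (A : Matrix m n K) (r : ι → m) (c : ι → n)
    (hdiag : ∀ i j, i ≠ j → A (r i) (c j) = 0) (hne : ∀ i, A (r i) (c i) ≠ 0)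
    (hrank : A.rank = Fintype.card ι) (i : m) (j : n) :
    A i j = ∑ t, A i (c t) * (A (r t) j / A (r t) (c t)) := by
  have row_sum (g : ι → K) (t : ι) :
      ∑ s, g s * A (r t) (c s) = g t * A (r t) (c t) :=
    Finset.sum_eq_single t (fun s _ hs => by rw [hdiag t s hs.symm, mul_zero]) (by simp)
  have hli : LinearIndependent K (fun t => A.col (c t)) := by
    rw [Fintype.linearIndependent_iff]
    intro g hg t
    have h := congrFun hg (r t)
    simp only [Finset.sum_apply, Pi.smul_apply, Matrix.col_apply, smul_eq_mul, Pi.zero_apply,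
      row_sum] at h
    exact (mul_eq_zero.mp h).resolve_right (hne t)
  have hspan : Submodule.span K (Set.range fun t => A.col (c t)) =
      Submodule.span K (Set.range A.col) := by
    apply Submodule.eq_of_le_of_finrank_eq
    · exact Submodule.span_mono (Set.range_comp_subset_range c A.col)
    · rw [finrank_span_eq_card hli, ← Matrix.rank_eq_finrank_span_cols, hrank]
  have hmem : A.col j ∈ Submodule.span K (Set.range fun t => A.col (c t)) :=
    hspan ▸ Submodule.subset_span ⟨j, rfl⟩
  obtain ⟨g, hg⟩ := (Submodule.mem_span_range_iff_exists_fun K).mp hmem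
  have entry (l : m) : ∑ t, g t * A l (c t) = A l j := by
    simpa [Finset.sum_apply] using congrFun hg l
  rw [← entry i]
  refine Finset.sum_congr rfl fun t _ => ?_
  rw [← entry (r t), row_sum, mul_div_cancel_right₀ _ (hne t), mul_comm]

theorem exists_NRF_of_diagonal_principal_submatrix {n m k : ℕ}
    (A : Matrix (Fin n) (Fin m) ℝ) (hA : ∀ i j, 0 ≤ A i j)
    (ri : Fin k → Fin n) (ci : Fin k → Fin m)
    (hri : Function.Injective ri) (hci : Function.Injective ci)
    (hdiag : ∀ i j : Fin k, i ≠ j → A (ri i) (ci j) = 0)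
    (hdpos : ∀ i : Fin k, 0 < A (ri i) (ci i))
    (hrank : A.rank = k) :
    ∃ (F : Matrix (Fin n) (Fin k) ℝ) (V : Matrix (Fin k) (Fin m) ℝ),
      (∀ i j, 0 ≤ F i j) ∧ (∀ i j, 0 ≤ V i j) ∧ A = F * V := by
  refine ⟨Matrix.of fun i t => A i (ci t), Matrix.of fun t j => A (ri t) j / A (ri t) (ci t),
    fun i t => hA i (ci t), fun t j => div_nonneg (hA _ _) (hA _ _), ?_⟩
  ext i j
  exact A.apply_eq_sum_of_diagonal_submatrix ri ci hdiag (fun t => (hdpos t).ne')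
    (by rw [hrank, Fintype.card_fin]) i j
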